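/- arXiv:1708.05136 — 2 statements merged into one kernel-verified Lean document; each statement's English description precedes it below -/
import Mathlib

section
/- Let H be a real Hilbert space and f : H → ℝ be μ-strongly convex with L-Lipschitz gradient ∇f (0 < μ ≤ L), and let κ = L/μ. Then the operator T := I − (2/(μ+L))∇f is (1 − 2/(κ+1))-Lipschitz; that is, ‖T(y) − T(x)‖ ≤ (1 − 2/(κ+1))·‖y − x‖ for all x, y ∈ H. -/
/-!
Subtracting the quadratic `μ / 2 * ‖·‖ ^ 2` from `f` leaves a convex function `h` whose gradient
satisfies `⟪∇h y - ∇h x, y - x⟫ ≤ (L - μ) * ‖y - x‖ ^ 2`. Comparing, at a gradient step from `y`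
taken for `h` tilted by its tangent plane at `x`, that tangent plane with the quadratic upper bound
for `h` at `y` shows that `∇h` is cocoercive (Baillon–Haddad). In terms of `∇f` this is the
coercivity inequality
`μ * L * ‖y - x‖ ^ 2 + ‖∇f y - ∇f x‖ ^ 2 ≤ (μ + L) * ⟪∇f y - ∇f x, y - x⟫`, and the contraction
estimate follows by expanding `‖(y - x) - (2 / (μ + L)) • (∇f y - ∇f x)‖ ^ 2`.
-/

open Set
open scoped RealInnerProductSpace

section LineDerivative

variable {E : Type*} [AddCommGroup E] [Module ℝ E] {f : E → ℝ} {f' : ℝ} {x y v : E}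

theorem hasDerivAt_add_smul_of_hasLineDerivAt {t : ℝ} (h : HasLineDerivAt ℝ f f' (x + t • v) v) :
    HasDerivAt (fun s : ℝ => f (x + s • v)) f' t := by
  have hshift : HasDerivAt (fun s : ℝ => f (x + t • v + s • v)) f' (t - t) := by
    rw [sub_self]
    exact h
  simpa [add_assoc, ← add_smul] using hshift.comp_sub_const t t

theorem add_lineDeriv_le_of_convexOn {s : Set E} (hf : ConvexOn ℝ s f) (hx : x ∈ s) (hy : y ∈ s)
    (h : HasLineDerivAt ℝ f f' x (y - x)) : f x + f' ≤ f y := by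
  have hline := hf.comp_affineMap (AffineMap.lineMap x y)
  have hderiv : HasDerivAt (f ∘ AffineMap.lineMap x y) f' (0 : ℝ) := by
    simpa [HasLineDerivAt, Function.comp_def, AffineMap.lineMap_apply_module', add_comm] using h
  have hslope := hline.le_slope_of_hasDerivAt (by simpa) (by simpa) one_pos hderiv
  simp only [slope_def_field, Function.comp_apply, AffineMap.lineMap_apply_one,
    AffineMap.lineMap_apply_zero] at hslope
  linarith

end LineDerivative

section InnerProductSpace

variable {H : Type*} [NormedAddCommGroup H] [InnerProductSpace ℝ H]

/-- `p` is the Gateaux gradient of `f` at `x`: it represents all the line derivatives of `f` at `x`.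
Unlike `HasGradientAt`, this requires neither Fréchet differentiability nor completeness of `H`. -/
def HasGateauxGradientAt (f : H → ℝ) (p x : H) : Prop :=
  ∀ v, HasLineDerivAt ℝ f ⟪p, v⟫ x v

theorem hasGateauxGradientAt_of_hasGradientAt [CompleteSpace H] {f : H → ℝ} {p x : H}
    (h : HasGradientAt f p x) : HasGateauxGradientAt f p x := fun v => by
  simpa using h.hasFDerivAt.hasLineDerivAt v

theorem HasGateauxGradientAt.sub_half_mul_norm_sq {f : H → ℝ} {p x : H}
    (h : HasGateauxGradientAt f p x) (c : ℝ) :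
    HasGateauxGradientAt (fun z => f z - c / 2 * ‖z‖ ^ 2) (p - c • x) x := fun v => by
  have hsq : HasLineDerivAt ℝ (fun z : H => ‖z‖ ^ 2) (2 * ⟪x, v⟫) x v := by
    simpa using (hasStrictFDerivAt_norm_sq x).hasFDerivAt.hasLineDerivAt v
  refine (HasDerivAt.fun_sub (h v) (HasDerivAt.const_mul (c / 2) hsq)).congr_deriv ?_
  rw [inner_sub_left, real_inner_smul_left]
  ring

theorem le_add_inner_add_norm_sq_of_inner_sub_le {f : H → ℝ} {g : H → H} {M : ℝ} {x y : H}
    (hg : ∀ z ∈ segment ℝ x y, HasGateauxGradientAt f (g z) z)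
    (hM : ∀ z ∈ segment ℝ x y, ⟪g z - g x, z - x⟫ ≤ M * ‖z - x‖ ^ 2) :
    f y ≤ f x + ⟪g x, y - x⟫ + M / 2 * ‖y - x‖ ^ 2 := by
  set v := y - x with hv
  have hmem {t : ℝ} (ht : t ∈ Icc 0 1) : x + t • v ∈ segment ℝ x y := by
    rw [segment_eq_image']
    exact mem_image_of_mem _ ht
  have hderiv {t : ℝ} (ht : t ∈ Icc 0 1) :
      HasDerivAt (fun s : ℝ => f (x + s • v)) ⟪g (x + t • v), v⟫ t :=
    hasDerivAt_add_smul_of_hasLineDerivAt (hg _ (hmem ht) v)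
  have hquad (t : ℝ) : HasDerivAt (fun s => f x + ⟪g x, v⟫ * s + M / 2 * ‖v‖ ^ 2 * s ^ 2)
      (⟪g x, v⟫ + M * ‖v‖ ^ 2 * t) t := by
    refine ((((hasDerivAt_id' t).const_mul _).const_add _).fun_add
      ((hasDerivAt_pow 2 t).const_mul _)).congr_deriv ?_
    norm_num
    ring
  have hslope {t : ℝ} (ht : t ∈ Icc 0 1) : ⟪g (x + t • v), v⟫ ≤ ⟪g x, v⟫ + M * ‖v‖ ^ 2 * t := by
    obtain rfl | hpos := ht.1.eq_or_lt
    · simp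
    have hMt := hM _ (hmem ht)
    rw [add_sub_cancel_left, real_inner_smul_right, norm_smul, mul_pow, Real.norm_eq_abs, sq_abs,
      inner_sub_left] at hMt
    refine le_of_mul_le_mul_left ?_ hpos
    linarith
  have hle := image_le_of_deriv_right_le_deriv_boundary
    (fun t ht => (hderiv ht).continuousAt.continuousWithinAt)
    (fun t ht => (hderiv (Ico_subset_Icc_self ht)).hasDerivWithinAt) (by simp)
    (fun t _ => (hquad t).continuousAt.continuousWithinAt)
    (fun t _ => (hquad t).hasDerivWithinAt) (fun t ht => hslope (Ico_subset_Icc_self ht))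
    (right_mem_Icc.2 zero_le_one)
  simpa [hv] using hle

section Cocoercivity

variable {f : H → ℝ} {g : H → H} {M : ℝ}

theorem add_inner_add_norm_sq_le_of_convexOn (hf : ConvexOn ℝ univ f)
    (hg : ∀ x, HasGateauxGradientAt f (g x) x)
    (hM : ∀ x y, ⟪g y - g x, y - x⟫ ≤ M * ‖y - x‖ ^ 2) (t : ℝ) (x y : H) :
    f x + ⟪g x, y - x⟫ + (t - M / 2 * t ^ 2) * ‖g y - g x‖ ^ 2 ≤ f y := by
  set d := g y - g x with hd
  have hlower : f x + ⟪g x, y - t • d - x⟫ ≤ f (y - t • d) :=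
    add_lineDeriv_le_of_convexOn hf (mem_univ _) (mem_univ _) (hg x _)
  have hupper : f (y - t • d) ≤ f y + ⟪g y, y - t • d - y⟫ + M / 2 * ‖y - t • d - y‖ ^ 2 :=
    le_add_inner_add_norm_sq_of_inner_sub_le (fun z _ => hg z) (fun z _ => hM y z)
  have hnorm : ⟪g y, d⟫ - ⟪g x, d⟫ = ‖d‖ ^ 2 := by
    rw [← inner_sub_left, ← hd, real_inner_self_eq_norm_sq]
  rw [sub_right_comm, inner_sub_right, real_inner_smul_right] at hlower
  rw [sub_sub_cancel_left, inner_neg_right, real_inner_smul_right, norm_neg, norm_smul, mul_pow,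
    Real.norm_eq_abs, sq_abs] at hupper
  linear_combination hlower + hupper - t * hnorm

theorem norm_sub_sq_le_mul_inner_of_convexOn (hf : ConvexOn ℝ univ f)
    (hg : ∀ x, HasGateauxGradientAt f (g x) x)
    (hM : ∀ x y, ⟪g y - g x, y - x⟫ ≤ M * ‖y - x‖ ^ 2) (x y : H) :
    ‖g y - g x‖ ^ 2 ≤ M * ⟪g y - g x, y - x⟫ := by
  have hstep (t : ℝ) : (2 * t - M * t ^ 2) * ‖g y - g x‖ ^ 2 ≤ ⟪g y - g x, y - x⟫ := by
    have hxy := add_inner_add_norm_sq_le_of_convexOn hf hg hM t x y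
    have hyx := add_inner_add_norm_sq_le_of_convexOn hf hg hM t y x
    rw [norm_sub_rev, ← neg_sub y x, inner_neg_right] at hyx
    rw [inner_sub_left]
    linarith
  obtain hM₀ | hM₀ := le_or_gt M 0
  · have hinner : ⟪g y - g x, y - x⟫ ≤ 0 :=
      (hM x y).trans (mul_nonpos_of_nonpos_of_nonneg hM₀ (sq_nonneg _))
    have hone := hstep 1
    have hzero : ‖g y - g x‖ ^ 2 ≤ 0 := by nlinarith [sq_nonneg ‖g y - g x‖]
    exact hzero.trans (mul_nonneg_of_nonpos_of_nonpos hM₀ hinner)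
  · -- `t = M⁻¹` maximises `2 * t - M * t ^ 2`.
    calc
      ‖g y - g x‖ ^ 2 = M * ((2 * M⁻¹ - M * M⁻¹ ^ 2) * ‖g y - g x‖ ^ 2) := by
        field_simp
        ring
      _ ≤ M * ⟪g y - g x, y - x⟫ := mul_le_mul_of_nonneg_left (hstep M⁻¹) hM₀.le

end Cocoercivity

theorem mul_norm_sq_add_norm_sq_le_of_strongConvexOn {f : H → ℝ} {g : H → H} {μ L : ℝ}
    (hf : StrongConvexOn univ μ f) (hg : ∀ x, HasGateauxGradientAt f (g x) x)
    (hL : ∀ x y, ⟪g y - g x, y - x⟫ ≤ L * ‖y - x‖ ^ 2) (x y : H) :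
    μ * L * ‖y - x‖ ^ 2 + ‖g y - g x‖ ^ 2 ≤ (μ + L) * ⟪g y - g x, y - x⟫ := by
  have hsub (x y : H) : g y - μ • y - (g x - μ • x) = g y - g x - μ • (y - x) := by module
  have hinner (x y : H) : ⟪g y - μ • y - (g x - μ • x), y - x⟫ =
      ⟪g y - g x, y - x⟫ - μ * ‖y - x‖ ^ 2 := by
    rw [hsub, inner_sub_left, real_inner_smul_left, real_inner_self_eq_norm_sq]
  have hco := norm_sub_sq_le_mul_inner_of_convexOn (M := L - μ) (strongConvexOn_iff_convex.1 hf)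
    (fun x => (hg x).sub_half_mul_norm_sq μ)
    (fun x y => by rw [hinner]; linarith [hL x y]) x y
  rw [hinner, hsub, norm_sub_sq_real, real_inner_smul_right, norm_smul, mul_pow, Real.norm_eq_abs,
    sq_abs] at hco
  linarith

theorem norm_sub_smul_le_of_mul_norm_sq_add_norm_sq_le {μ L : ℝ} (hμL : μ + L ≠ 0) {d v : H}
    (h : μ * L * ‖v‖ ^ 2 + ‖d‖ ^ 2 ≤ (μ + L) * ⟪d, v⟫) :
    ‖v - (2 / (μ + L)) • d‖ ≤ |(L - μ) / (μ + L)| * ‖v‖ := by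
  refine le_of_sq_le_sq ?_ (by positivity)
  calc
    ‖v - (2 / (μ + L)) • d‖ ^ 2
        = ‖v‖ ^ 2 + 4 / (μ + L) ^ 2 * (‖d‖ ^ 2 - (μ + L) * ⟪d, v⟫) := by
      rw [norm_sub_sq_real, real_inner_smul_right, real_inner_comm, norm_smul, mul_pow,
        Real.norm_eq_abs, sq_abs]
      field_simp
      ring
    _ ≤ ‖v‖ ^ 2 + 4 / (μ + L) ^ 2 * (-(μ * L * ‖v‖ ^ 2)) := by
      gcongr
      linarith
    _ = (|(L - μ) / (μ + L)| * ‖v‖) ^ 2 := by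
      rw [mul_pow, sq_abs]
      field_simp
      ring

theorem inner_le_mul_norm_sq_of_norm_le {d v : H} {L : ℝ} (h : ‖d‖ ≤ L * ‖v‖) :
    ⟪d, v⟫ ≤ L * ‖v‖ ^ 2 :=
  calc
    ⟪d, v⟫ ≤ ‖d‖ * ‖v‖ := real_inner_le_norm d v
    _ ≤ L * ‖v‖ * ‖v‖ := by gcongr
    _ = L * ‖v‖ ^ 2 := by ring

theorem gradient_descent_operator_lipschitz_general {f : H → ℝ} {g : H → H} {μ L : ℝ}
    (hμL : μ + L ≠ 0) (hg : ∀ x, HasGateauxGradientAt f (g x) x)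
    (hf : StrongConvexOn univ μ f)
    (hL : ∀ x y, ⟪g y - g x, y - x⟫ ≤ L * ‖y - x‖ ^ 2) (x y : H) :
    ‖(y - (2 / (μ + L)) • g y) - (x - (2 / (μ + L)) • g x)‖ ≤
      |(L - μ) / (μ + L)| * ‖y - x‖ := by
  rw [sub_sub_sub_comm, ← smul_sub]
  exact norm_sub_smul_le_of_mul_norm_sq_add_norm_sq_le hμL
    (mul_norm_sq_add_norm_sq_le_of_strongConvexOn hf hg hL x y)

end InnerProductSpace

theorem abs_sub_div_add_eq_one_sub_two_div {μ L : ℝ} (hμ : 0 < μ) (hμL : μ ≤ L) :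
    |(L - μ) / (μ + L)| = 1 - 2 / (L / μ + 1) := by
  have hL : 0 < L := hμ.trans_le hμL
  rw [abs_of_nonneg (div_nonneg (sub_nonneg.2 hμL) (by positivity))]
  field_simp
  ring

/-- if `f` is `μ`-strongly convex with `L`-Lipschitz gradient `g` and
`κ = L/μ`, then `T = I - (2/(μ+L))∇f` is `(1 - 2/(κ+1))`-Lipschitz. -/
theorem gradient_descent_operator_lipschitz
    {H : Type*} [NormedAddCommGroup H] [InnerProductSpace ℝ H] [CompleteSpace H]
    (f : H → ℝ) (g : H → H) (μ L : ℝ) (hμ : 0 < μ) (hμL : μ ≤ L)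
    (hgrad : ∀ x, HasGradientAt f (g x) x)
    (hstrong : ConvexOn ℝ Set.univ (fun x => f x - μ / 2 * ‖x‖ ^ 2))
    (hlip : ∀ x y, ‖g y - g x‖ ≤ L * ‖y - x‖) :
    ∀ x y : H,
      ‖(y - (2 / (μ + L)) • g y) - (x - (2 / (μ + L)) • g x)‖ ≤
        (1 - 2 / (L / μ + 1)) * ‖y - x‖ := by
  rw [← abs_sub_div_add_eq_one_sub_two_div hμ hμL]
  exact gradient_descent_operator_lipschitz_general (by linarith)
    (fun x => hasGateauxGradientAt_of_hasGradientAt (hgrad x))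
    (strongConvexOn_iff_convex.2 hstrong) fun x y => inner_le_mul_norm_sq_of_norm_le (hlip x y)
end

section
/- (Asymptotic iteration complexity of ARock under stochastic delays.) Fix r ∈ (0,1) and ε ∈ (0,1), and for each m ∈ ℕ let a delay distribution with tail probabilities P_l(m) be given with moments M_1(m) := Σ_{l=1}^∞ P_l(m) ρ(m)^{−l/2} and M_2(m) := Σ_{l=1}^∞ P_l(m)^{1/2} ρ(m)^{−l/2} finite and satisfying M_1(m), M_2(m) = O(m^q) for some 0 ≤ q < 1/2, where ρ(m) = 1 − (1/m)(1 − r²). Set η_1(m) := (1 + m^{−1/2}((1 − r²)^{1/2} M_1(m) + 2 M_2(m)))^{−1} and η_2(m) := m^{1/2}(1 − r²)^{−1/2} M_1(m)^{−1}. Then the epoch iteration complexity I(ε, m), defined by R(η_1(m), η_2(m))^{I·m} = ε, satisfies I(ε, m) = (1 + 2 m^{−1/2}((1 − r²)^{1/2} M_1(m) + M_2(m)) + o(m^{−1/2+q}))·(1/(1 − r²))·ln(1/ε) as m → ∞; in particular I(ε, m) = (1 + O(m^{−1/2+q}))·(1/(1 − r²))·ln(1/ε), matching the ideal synchronous complexity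 asymptotically. -/
open Filter Asymptotics

/-- `ρ(m) = 1 - (1/m)(1-r²)`. -/
noncomputable def rhoF (r : ℝ) (m : ℕ) : ℝ := 1 - (1 / (m : ℝ)) * (1 - r ^ 2)

/-!
Put `c = 1 - r²`, `a = m^{-1/2} √c M₁` and `b = m^{-1/2} M₂`, so that `η₁ = (1 + a + 2b)⁻¹` and
`η₂ = a⁻¹`. Then `1 - R(η₁, η₂) = c (1 + 2b) / (m (1 + a + 2b)²)`, and since `-1 / log R` differs
from `1 / (1 - R)` by at most `1`, up to a factor `ln (1/ε)` the complexity is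
`(1 + a + 2b)² / (c (1 + 2b)) + O(1/m) = (1 + 2(a + b)) / c + O(a²) + O(1/m)`.
Both error terms are `o(m^{-1/2+q})`: the first because `a = O(m^{-1/2+q})` tends to zero, the
second because `-1/2 + q > -1`.
-/

theorem abs_inv_neg_log_sub_inv_one_sub_le_one {y : ℝ} (hy0 : 0 < y) (hy1 : y < 1) :
    |(-Real.log y)⁻¹ - (1 - y)⁻¹| ≤ 1 := by
  have hlower : 1 - y ≤ -Real.log y := by linarith [Real.log_le_sub_one_of_pos hy0]
  have hupper : -Real.log y ≤ (1 - y) / y := by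
    rw [sub_div, div_self hy0.ne', one_div]
    linarith [Real.one_sub_inv_le_log_of_pos hy0]
  have hinv_le : (-Real.log y)⁻¹ ≤ (1 - y)⁻¹ := inv_anti₀ (sub_pos.2 hy1) hlower
  have hle_inv : (1 - y)⁻¹ - 1 ≤ (-Real.log y)⁻¹ := by
    calc (1 - y)⁻¹ - 1 = ((1 - y) / y)⁻¹ := by
          have := (sub_pos.2 hy1).ne'
          field_simp
          ring
      _ ≤ (-Real.log y)⁻¹ := inv_anti₀ ((sub_pos.2 hy1).trans_le hlower) hupper
  rw [abs_le]
  constructor <;> linarith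

theorem abs_log_div_mul_log_sub_le (ε : ℝ) {n y : ℝ} (hn : 0 < n) (hy0 : 0 < y) (hy1 : y < 1) :
    |Real.log ε / (n * Real.log y) - (n * (1 - y))⁻¹ * Real.log (1 / ε)| ≤
      |Real.log ε| * n⁻¹ := by
  have hfactor : Real.log ε / (n * Real.log y) - (n * (1 - y))⁻¹ * Real.log (1 / ε) =
      -(Real.log ε * n⁻¹ * ((-Real.log y)⁻¹ - (1 - y)⁻¹)) := by
    rw [one_div, Real.log_inv, inv_neg, div_eq_mul_inv, mul_inv, mul_inv]
    ring
  rw [hfactor, abs_neg, abs_mul, abs_mul, abs_of_pos (inv_pos.2 hn)]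
  exact mul_le_of_le_one_right (by positivity) (abs_inv_neg_log_sub_inv_one_sub_le_one hy0 hy1)

/-- The convergence rate `R(η, γ)` of ARock with `n` coordinates for an operator whose contraction
factor `r` enters through `c = 1 - r ^ 2`. Division by zero makes `γ = 0` encode the delay-free
limit `γ = ∞`, as happens when `M₁ = 0`. -/
noncomputable def convergenceRate (c n η γ : ℝ) : ℝ := 1 - η / n * c * (1 - η / γ)

/-- The epoch iteration complexity: the number of epochs of `n` iterations after which the factor
`convergenceRate c n η γ` per iteration has accumulated to `ε`. -/
noncomputable def epochComplexity (c ε n η γ : ℝ) : ℝ :=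
  Real.log ε / (n * Real.log (convergenceRate c n η γ))

section SmallMoments

variable {ι : Type*} {l : Filter ι} {c : ℝ}

theorem convergenceRate_inv_inv (c n : ℝ) {a b : ℝ} (hη : 1 + (a + 2 * b) ≠ 0) :
    convergenceRate c n (1 + (a + 2 * b))⁻¹ a⁻¹ =
      1 - c * ((1 + 2 * b) / (1 + (a + 2 * b)) ^ 2) * n⁻¹ := by
  rw [convergenceRate, div_inv_eq_mul]
  field_simp
  ring

-- Completing the square: `(1 + 2b + a)² / (1 + 2b) = 1 + 2(a + b) + a² / (1 + 2b)`.
theorem inv_mul_one_sub_convergenceRate_inv_inv {n a b : ℝ} (hc : c ≠ 0) (hn : n ≠ 0)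
    (hη : 1 + (a + 2 * b) ≠ 0) (hb : 1 + 2 * b ≠ 0) :
    (n * (1 - convergenceRate c n (1 + (a + 2 * b))⁻¹ a⁻¹))⁻¹ =
      (1 + 2 * (a + b)) * (1 / c) + a ^ 2 * (1 / c * (1 + 2 * b)⁻¹) := by
  rw [convergenceRate_inv_inv c n hη]
  field_simp
  ring

theorem eventually_convergenceRate_inv_inv_mem_Ioo (hc : 0 < c) {n a b : ι → ℝ}
    (hn : Tendsto n l atTop) (ha : Tendsto a l (nhds 0)) (hb : Tendsto b l (nhds 0)) :
    ∀ᶠ t in l, convergenceRate c (n t) (1 + (a t + 2 * b t))⁻¹ (a t)⁻¹ ∈ Set.Ioo 0 1 := by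
  have hη : Tendsto (fun t => 1 + (a t + 2 * b t)) l (nhds 1) := by
    simpa using (ha.add (hb.const_mul 2)).const_add 1
  have hb' : Tendsto (fun t => 1 + 2 * b t) l (nhds 1) := by
    simpa using (hb.const_mul 2).const_add 1
  have hgap : Tendsto (fun t => c * ((1 + 2 * b t) / (1 + (a t + 2 * b t)) ^ 2) * (n t)⁻¹) l
      (nhds 0) := by
    simpa using ((hb'.div (hη.pow 2) (by norm_num)).const_mul c).mul hn.inv_tendsto_atTop
  filter_upwards [hn.eventually_gt_atTop 0, hη.eventually_const_lt one_pos,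
    hb'.eventually_const_lt one_pos, hgap.eventually_lt_const one_pos] with t hnt hηt hbt hgapt
  rw [convergenceRate_inv_inv c (n t) hηt.ne']
  exact ⟨sub_pos.2 hgapt, sub_lt_self 1 (by positivity)⟩

theorem isBigO_epochComplexity_sub_inv_one_sub_convergenceRate (hc : 0 < c) (ε : ℝ) {n a b : ι → ℝ}
    (hn : Tendsto n l atTop) (ha : Tendsto a l (nhds 0)) (hb : Tendsto b l (nhds 0)) :
    (fun t => epochComplexity c ε (n t) (1 + (a t + 2 * b t))⁻¹ (a t)⁻¹ -
        (n t * (1 - convergenceRate c (n t) (1 + (a t + 2 * b t))⁻¹ (a t)⁻¹))⁻¹ *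
          Real.log (1 / ε))
      =O[l] fun t => (n t)⁻¹ := by
  refine IsBigO.of_bound |Real.log ε| ?_
  filter_upwards [hn.eventually_gt_atTop 0,
    eventually_convergenceRate_inv_inv_mem_Ioo hc hn ha hb] with t hnt hrate
  rw [Real.norm_eq_abs, Real.norm_of_nonneg (inv_nonneg.2 hnt.le)]
  exact abs_log_div_mul_log_sub_le ε hnt hrate.1 hrate.2

theorem isBigO_inv_one_sub_convergenceRate_sub (hc : c ≠ 0) {n a b : ι → ℝ}
    (hn : Tendsto n l atTop) (ha : Tendsto a l (nhds 0)) (hb : Tendsto b l (nhds 0)) :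
    (fun t => (n t * (1 - convergenceRate c (n t) (1 + (a t + 2 * b t))⁻¹ (a t)⁻¹))⁻¹ -
        (1 + 2 * (a t + b t)) * (1 / c))
      =O[l] fun t => a t ^ 2 := by
  have hη : Tendsto (fun t => 1 + (a t + 2 * b t)) l (nhds 1) := by
    simpa using (ha.add (hb.const_mul 2)).const_add 1
  have hb' : Tendsto (fun t => 1 + 2 * b t) l (nhds 1) := by
    simpa using (hb.const_mul 2).const_add 1
  have hremainder : (fun t => a t ^ 2 * (1 / c * (1 + 2 * b t)⁻¹)) =O[l] fun t => a t ^ 2 := by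
    simpa only [mul_one] using (isBigO_refl (fun t => a t ^ 2) l).mul
      (((hb'.inv₀ one_ne_zero).const_mul (1 / c)).isBigO_one ℝ)
  refine hremainder.congr' ?_ .rfl
  filter_upwards [hn.eventually_ne_atTop 0, hη.eventually_ne one_ne_zero,
    hb'.eventually_ne one_ne_zero] with t hnt hηt hbt
  rw [inv_mul_one_sub_convergenceRate_inv_inv hc hnt hηt hbt, add_sub_cancel_left]

theorem isLittleO_epochComplexity_sub (hc : 0 < c) (ε : ℝ) {n a b g : ι → ℝ}
    (hn : Tendsto n l atTop) (ha : Tendsto a l (nhds 0)) (hb : Tendsto b l (nhds 0))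
    (hng : (fun t => (n t)⁻¹) =o[l] g) (hag : (fun t => a t ^ 2) =o[l] g) :
    (fun t => epochComplexity c ε (n t) (1 + (a t + 2 * b t))⁻¹ (a t)⁻¹ -
        (1 + 2 * (a t + b t)) * (1 / c) * Real.log (1 / ε)) =o[l] g := by
  have hlog :=
    (isBigO_epochComplexity_sub_inv_one_sub_convergenceRate hc ε hn ha hb).trans_isLittleO hng
  have hgap := (isBigO_inv_one_sub_convergenceRate_sub hc.ne' hn ha hb).trans_isLittleO hag
  refine (hlog.add (hgap.const_mul_left (Real.log (1 / ε)))).congr_left fun t => ?_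
  ring

end SmallMoments

theorem isLittleO_rpow_rpow_atTop {p q : ℝ} (hpq : p < q) :
    (fun x : ℝ => x ^ p) =o[atTop] fun x : ℝ => x ^ q := by
  have hratio : (fun x : ℝ => x ^ (-(q - p))) =o[atTop] fun _ : ℝ => (1 : ℝ) :=
    (isLittleO_one_iff ℝ).2 (tendsto_rpow_neg_atTop (sub_pos.2 hpq))
  refine (hratio.mul_isBigO (isBigO_refl (fun x : ℝ => x ^ q) atTop)).congr' ?_ (by simp)
  filter_upwards [eventually_gt_atTop 0] with x hx
  rw [← Real.rpow_add hx]
  ring_nf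

theorem isBigO_rpow_mul_natCast {M : ℕ → ℝ} {q : ℝ}
    (hM : M =O[atTop] fun m : ℕ => (m : ℝ) ^ q) (s : ℝ) :
    (fun m : ℕ => (m : ℝ) ^ s * M m) =O[atTop] fun m : ℕ => (m : ℝ) ^ (s + q) := by
  refine ((isBigO_refl _ _).mul hM).trans_eventuallyEq ?_
  filter_upwards [eventually_gt_atTop 0] with m hm
  rw [Real.rpow_add (Nat.cast_pos.2 hm)]

section PowerScale

variable {c p : ℝ} {a b : ℕ → ℝ}

theorem isLittleO_epochComplexity_sub_rpow (hc : 0 < c) (ε : ℝ) (hp1 : -1 < p) (hp0 : p < 0)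
    (ha : a =O[atTop] fun m : ℕ => (m : ℝ) ^ p) (hb : b =O[atTop] fun m : ℕ => (m : ℝ) ^ p) :
    (fun m : ℕ => epochComplexity c ε m (1 + (a m + 2 * b m))⁻¹ (a m)⁻¹ -
        (1 + 2 * (a m + b m)) * (1 / c) * Real.log (1 / ε))
      =o[atTop] fun m : ℕ => (m : ℝ) ^ p := by
  have hpow_one : (fun m : ℕ => (m : ℝ) ^ p) =o[atTop] fun _ => (1 : ℝ) := by
    simpa only [Real.rpow_zero] using (isLittleO_rpow_rpow_atTop hp0).natCast_atTop
  have hpow_lim := (isLittleO_one_iff ℝ).1 hpow_one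
  have hinv : (fun m : ℕ => (m : ℝ)⁻¹) =o[atTop] fun m : ℕ => (m : ℝ) ^ p := by
    simpa only [Real.rpow_neg_one] using (isLittleO_rpow_rpow_atTop hp1).natCast_atTop
  have hsq : (fun m => a m ^ 2) =o[atTop] fun m : ℕ => (m : ℝ) ^ p := by
    simpa only [sq, mul_one] using ha.mul_isLittleO (ha.trans_isLittleO hpow_one)
  exact isLittleO_epochComplexity_sub hc ε tendsto_natCast_atTop_atTop
    (ha.trans_tendsto hpow_lim) (hb.trans_tendsto hpow_lim) hinv hsq

theorem isBigO_epochComplexity_sub_rpow (hc : 0 < c) (ε : ℝ) (hp1 : -1 < p) (hp0 : p < 0)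
    (ha : a =O[atTop] fun m : ℕ => (m : ℝ) ^ p) (hb : b =O[atTop] fun m : ℕ => (m : ℝ) ^ p) :
    (fun m : ℕ => epochComplexity c ε m (1 + (a m + 2 * b m))⁻¹ (a m)⁻¹ -
        (1 / c) * Real.log (1 / ε))
      =O[atTop] fun m : ℕ => (m : ℝ) ^ p := by
  refine ((isLittleO_epochComplexity_sub_rpow hc ε hp1 hp0 ha hb).isBigO.add
    ((ha.add hb).const_mul_left (2 * (1 / c) * Real.log (1 / ε)))).congr_left fun m => ?_
  ring

end PowerScale

theorem ARock_asymptotic_complexity_stochastic_general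
    {c : ℝ} (hc : 0 < c) {ε : ℝ} (hε0 : 0 < ε) {q : ℝ} (hq0 : -(1 / 2) < q) (hq1 : q < 1 / 2)
    {M₁ M₂ : ℕ → ℝ}
    (hM₁O : M₁ =O[atTop] fun m : ℕ => (m : ℝ) ^ q)
    (hM₂O : M₂ =O[atTop] fun m : ℕ => (m : ℝ) ^ q)
    {η₁ η₂ I : ℕ → ℝ}
    (hη₁ : ∀ m : ℕ, η₁ m =
      (1 + ((m : ℝ) ^ (-(1 : ℝ) / 2)) * (Real.sqrt c * M₁ m + 2 * M₂ m))⁻¹)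
    (hη₂ : ∀ m : ℕ, η₂ m = Real.sqrt m * (Real.sqrt c)⁻¹ * (M₁ m)⁻¹)
    (hI : ∀ m : ℕ, I m = epochComplexity c ε m (η₁ m) (η₂ m)) :
    ((fun m : ℕ => I m - (1 + 2 * ((m : ℝ) ^ (-(1 : ℝ) / 2)) * (Real.sqrt c * M₁ m + M₂ m)) *
          (1 / c) * Real.log (1 / ε))
      =o[atTop] fun m : ℕ => (m : ℝ) ^ (-(1 : ℝ) / 2 + q)) ∧
    ((fun m : ℕ => I m - (1 / c) * Real.log (1 / ε))
      =O[atTop] fun m : ℕ => (m : ℝ) ^ (-(1 : ℝ) / 2 + q)) := by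
  let a : ℕ → ℝ := fun m => (m : ℝ) ^ (-(1 : ℝ) / 2) * (Real.sqrt c * M₁ m)
  let b : ℕ → ℝ := fun m => (m : ℝ) ^ (-(1 : ℝ) / 2) * M₂ m
  have ha : a =O[atTop] fun m : ℕ => (m : ℝ) ^ (-(1 : ℝ) / 2 + q) :=
    isBigO_rpow_mul_natCast (hM₁O.const_mul_left _) _
  have hb : b =O[atTop] fun m : ℕ => (m : ℝ) ^ (-(1 : ℝ) / 2 + q) :=
    isBigO_rpow_mul_natCast hM₂O _
  have hη₁_rescaled (m : ℕ) : η₁ m = (1 + (a m + 2 * b m))⁻¹ := by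
    simp only [hη₁, a, b]
    ring_nf
  have hη₂_rescaled (m : ℕ) : η₂ m = (a m)⁻¹ := by
    simp only [hη₂, a, neg_div, Real.rpow_neg m.cast_nonneg, ← Real.sqrt_eq_rpow, mul_inv,
      inv_inv, mul_assoc]
  have hp1 : -1 < -(1 : ℝ) / 2 + q := by linarith
  have hp0 : -(1 : ℝ) / 2 + q < 0 := by linarith
  simp only [hI, hη₁_rescaled, hη₂_rescaled]
  refine ⟨(isLittleO_epochComplexity_sub_rpow hc ε hp1 hp0 ha hb).congr_left fun m => ?_,
    isBigO_epochComplexity_sub_rpow hc ε hp1 hp0 ha hb⟩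
  simp only [a, b]
  ring

/-- asymptotic epoch iteration complexity of ARock under stochastic
delays.  For each `m`, the delay distribution has tail probabilities `P m l`, moments
`M₁(m) = Σ_l P_l ρ^{-l/2}`, `M₂(m) = Σ_l P_l^{1/2} ρ^{-l/2}` that are finite and
`O(m^q)` for some `0 ≤ q < 1/2`.  With `η₁(m) = (1 + m^{-1/2}((1-r²)^{1/2}M₁ + 2M₂))⁻¹`
and `η₂(m) = m^{1/2}(1-r²)^{-1/2}M₁⁻¹`, the epoch iteration complexity
`I(ε,m) = ln(ε)/(m·ln R(η₁(m),η₂(m)))` satisfies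
`I(ε,m) = (1 + 2m^{-1/2}((1-r²)^{1/2}M₁(m) + M₂(m)) + o(m^{-1/2+q}))·(1/(1-r²))·ln(1/ε)`;
in particular `I(ε,m) = (1 + O(m^{-1/2+q}))·(1/(1-r²))·ln(1/ε)`. -/
theorem ARock_asymptotic_complexity_stochastic
    (r : ℝ) (hr0 : 0 < r) (hr1 : r < 1)
    (ε : ℝ) (hε0 : 0 < ε) (hε1 : ε < 1)
    (q : ℝ) (hq0 : 0 ≤ q) (hq1 : q < 1 / 2)
    (P : ℕ → ℕ → ℝ)
    (hP0 : ∀ m l, 0 ≤ P m l) (hP1 : ∀ m l, P m l ≤ 1) (hPanti : ∀ m, Antitone (P m))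
    (hM₁sum : ∀ m : ℕ,
      Summable fun l : ℕ => P m (l + 1) * (rhoF r m) ^ (-(((l : ℝ) + 1) / 2)))
    (hM₂sum : ∀ m : ℕ,
      Summable fun l : ℕ => (P m (l + 1)) ^ ((1 : ℝ) / 2) * (rhoF r m) ^ (-(((l : ℝ) + 1) / 2)))
    (M₁ : ℕ → ℝ)
    (hM₁ : ∀ m : ℕ, M₁ m = ∑' l : ℕ, P m (l + 1) * (rhoF r m) ^ (-(((l : ℝ) + 1) / 2)))
    (M₂ : ℕ → ℝ)
    (hM₂ : ∀ m : ℕ, M₂ m = ∑' l : ℕ,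
      (P m (l + 1)) ^ ((1 : ℝ) / 2) * (rhoF r m) ^ (-(((l : ℝ) + 1) / 2)))
    (hM₁O : M₁ =O[atTop] fun m : ℕ => (m : ℝ) ^ q)
    (hM₂O : M₂ =O[atTop] fun m : ℕ => (m : ℝ) ^ q)
    (η₁ : ℕ → ℝ)
    (hη₁ : ∀ m : ℕ, η₁ m =
      (1 + ((m : ℝ) ^ (-(1 : ℝ) / 2)) * (Real.sqrt (1 - r ^ 2) * M₁ m + 2 * M₂ m))⁻¹)
    (η₂ : ℕ → ℝ)
    (hη₂ : ∀ m : ℕ, η₂ m = Real.sqrt m * (Real.sqrt (1 - r ^ 2))⁻¹ * (M₁ m)⁻¹)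
    (I : ℕ → ℝ)
    (hI : ∀ m : ℕ, I m = Real.log ε /
      ((m : ℝ) * Real.log (1 - (η₁ m / (m : ℝ)) * (1 - r ^ 2) * (1 - η₁ m / η₂ m)))) :
    ((fun m : ℕ =>
        I m - (1 + 2 * ((m : ℝ) ^ (-(1 : ℝ) / 2)) *
            (Real.sqrt (1 - r ^ 2) * M₁ m + M₂ m)) * (1 / (1 - r ^ 2)) * Real.log (1 / ε))
      =o[atTop] fun m : ℕ => (m : ℝ) ^ (-(1 : ℝ) / 2 + q)) ∧
    ((fun m : ℕ => I m - (1 / (1 - r ^ 2)) * Real.log (1 / ε))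
      =O[atTop] fun m : ℕ => (m : ℝ) ^ (-(1 : ℝ) / 2 + q)) :=
  ARock_asymptotic_complexity_stochastic_general (by nlinarith) hε0 (by linarith) hq1 hM₁O hM₂O
    hη₁ hη₂ hI
end
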